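/- For N ≡ 0 (mod 4) and real numbers c₁,c₂,c₃, the characteristic polynomial of the N-qubit state ρ_N = 2^{-N}(1 + ∑_{j=1}^{3} c_j σ_j^{⊗N}) equals [(X − (1+c₁−c₂−c₃)/2^N)(X − (1−c₁+c₂−c₃)/2^N)(X − (1−c₁−c₂+c₃)/2^N)(X − (1+c₁+c₂+c₃)/2^N)]^{2^{N−2}}; that is, the eigenvalues of ρ_N are (1+c₁−c₂−c₃)/2^N, (1−c₁+c₂−c₃)/2^N, (1−c₁−c₂+c₃)/2^N and (1+c₁+c₂+c₃)/2^N, each with multiplicity 2^{N−2}. -/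

import Mathlib

/-!
Write `Aⱼ = σⱼ^{⊗N}`. Kronecker powers are multiplicative and `I ^ N = 1` when `4 ∣ N`, so
`A₁ A₃ = A₃ A₁ = A₂`; also `A₁² = 1`. The matrix `A₃` is diagonal, its entry at `x` being the
parity sign of `x`. Let `Z` be the diagonal matrix whose entry at `x` is the sign of the bit `x 0`
(this is `σ₃ ⊗ 1 ⊗ ⋯ ⊗ 1`). It anticommutes with `A₁`, so `P = Z + A₁` satisfies `P² = 2` and
`P A₁ = Z P` (`hadamardLike_mul_self`, `hadamardLike_mul_pauliPow`), while `P` commutes with `A₃`. Hence `P`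
conjugates `ρ_N` to the diagonal matrix `2^{-N}(1 + c₁ Z + c₂ Z A₃ + c₃ A₃)`, and for `N ≥ 2`
each of the four pairs (sign of the first bit, parity sign) occurs for exactly `2^{N-2}` bit strings
(`prod_bitSign_paritySign`).
-/

open Matrix Complex Polynomial

noncomputable section

/-- The Pauli matrices σ₁, σ₂, σ₃ (indexed by `Fin 3`). -/
def σ : Fin 3 → Matrix (Fin 2) (Fin 2) ℂ
  | 0 => !![0, 1; 1, 0]
  | 1 => !![0, -Complex.I; Complex.I, 0]
  | 2 => !![1, 0; 0, -1]

/-- The N-fold Kronecker power σⱼ^{⊗N}, with entries (σⱼ^{⊗N})_{x,y} = ∏ₜ (σⱼ)_{x t, y t}. -/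
def pauliPow (N : ℕ) (j : Fin 3) : Matrix (Fin N → Fin 2) (Fin N → Fin 2) ℂ :=
  Matrix.of fun x y => ∏ t, σ j (x t) (y t)

/-- The N-qubit state ρ_N = 2^{-N}(1 + ∑ⱼ cⱼ σⱼ^{⊗N}). -/
def rhoN (N : ℕ) (c₁ c₂ c₃ : ℝ) : Matrix (Fin N → Fin 2) (Fin N → Fin 2) ℂ :=
  ((2 : ℂ) ^ N)⁻¹ •
    (1 + (c₁ : ℂ) • pauliPow N 0 + (c₂ : ℂ) • pauliPow N 1 + (c₃ : ℂ) • pauliPow N 2)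

/-- The `N`-fold Kronecker power of a `2 × 2` matrix; `pauliPow N j` is the case `A = σ j`. -/
def kronPow (N : ℕ) (A : Matrix (Fin 2) (Fin 2) ℂ) : Matrix (Fin N → Fin 2) (Fin N → Fin 2) ℂ :=
  Matrix.of fun x y => ∏ t, A (x t) (y t)

lemma kronPow_mul (N : ℕ) (A B : Matrix (Fin 2) (Fin 2) ℂ) :
    kronPow N A * kronPow N B = kronPow N (A * B) := by
  ext x y
  simp only [kronPow, Matrix.mul_apply, Matrix.of_apply, ← Finset.prod_mul_distrib]
  rw [Finset.prod_univ_sum, Fintype.piFinset_univ]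

lemma kronPow_smul (N : ℕ) (a : ℂ) (A : Matrix (Fin 2) (Fin 2) ℂ) :
    kronPow N (a • A) = a ^ N • kronPow N A := by
  ext x y
  simp [kronPow, Finset.prod_mul_distrib]

/-- The sign `(-1)^a` of a bit `a`. -/
def bitSign (a : Fin 2) : ℂ := σ 2 a a

/-- The parity sign `(-1)^{|x|}` of a bit string `x`. -/
def paritySign {N : ℕ} (x : Fin N → Fin 2) : ℂ := ∏ t, bitSign (x t)

lemma kronPow_diagonal (N : ℕ) (d : Fin 2 → ℂ) :
    kronPow N (diagonal d) = diagonal fun x => ∏ t, d (x t) := by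
  ext x y
  by_cases h : x = y
  · subst h
    simp [kronPow]
  · obtain ⟨t, ht⟩ := Function.ne_iff.mp h
    rw [diagonal_apply_ne _ h]
    exact Finset.prod_eq_zero (Finset.mem_univ t) (diagonal_apply_ne _ ht)

lemma pauliPow_two (N : ℕ) : pauliPow N 2 = diagonal paritySign := by
  have h : σ 2 = diagonal bitSign := by
    ext i j
    fin_cases i <;> fin_cases j <;> simp [σ, bitSign]
  change kronPow N (σ 2) = _
  rw [h, kronPow_diagonal]
  rfl

lemma pauliPow_zero_mul_self (N : ℕ) : pauliPow N 0 * pauliPow N 0 = 1 := by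
  change kronPow N (σ 0) * kronPow N (σ 0) = 1
  have h : σ 0 * σ 0 = diagonal fun _ => 1 := by
    ext i j
    fin_cases i <;> fin_cases j <;> simp [σ]
  rw [kronPow_mul, h, kronPow_diagonal]
  simp

lemma I_pow_of_mod_four {N : ℕ} (hN : N % 4 = 0) : I ^ N = 1 := by
  obtain ⟨k, rfl⟩ := Nat.dvd_of_mod_eq_zero hN
  rw [pow_mul, I_pow_four, one_pow]

lemma pauliPow_zero_mul_two {N : ℕ} (hN : N % 4 = 0) :
    pauliPow N 0 * pauliPow N 2 = pauliPow N 1 := by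
  change kronPow N (σ 0) * kronPow N (σ 2) = kronPow N (σ 1)
  have h : σ 1 = I • (σ 0 * σ 2) := by
    ext i j
    fin_cases i <;> fin_cases j <;> simp [σ]
  rw [kronPow_mul, h, kronPow_smul, I_pow_of_mod_four hN, one_smul]

lemma pauliPow_two_mul_zero {N : ℕ} (hN : N % 4 = 0) :
    pauliPow N 2 * pauliPow N 0 = pauliPow N 0 * pauliPow N 2 := by
  change kronPow N (σ 2) * kronPow N (σ 0) = kronPow N (σ 0) * kronPow N (σ 2)
  have h : σ 2 * σ 0 = (-1 : ℂ) • (σ 0 * σ 2) := by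
    ext i j
    fin_cases i <;> fin_cases j <;> simp [σ]
  have hs : (-1 : ℂ) ^ N = 1 := Even.neg_one_pow ⟨N / 2, by omega⟩
  rw [kronPow_mul, kronPow_mul, h, kronPow_smul, hs, one_smul]

/-- The operator `σ₃ ⊗ 1 ⊗ ⋯ ⊗ 1`, as a diagonal matrix. -/
def firstZ (m : ℕ) : Matrix (Fin (m + 1) → Fin 2) (Fin (m + 1) → Fin 2) ℂ :=
  diagonal fun x => bitSign (x 0)

lemma bitSign_mul_self (a : Fin 2) : bitSign a * bitSign a = 1 := by
  fin_cases a <;> simp [bitSign, σ]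

lemma firstZ_mul_self (m : ℕ) : firstZ m * firstZ m = 1 := by
  simp [firstZ, diagonal_mul_diagonal, bitSign_mul_self]

/-- `σ₁^{⊗N}` flips the first bit, hence anticommutes with the sign of that bit. -/
lemma firstZ_anticomm (m : ℕ) :
    pauliPow (m + 1) 0 * firstZ m = -(firstZ m * pauliPow (m + 1) 0) := by
  have key : ∀ a b : Fin 2, σ 0 a b * bitSign b = -(bitSign a * σ 0 a b) := by
    intro a b
    fin_cases a <;> fin_cases b <;> simp [σ, bitSign]
  ext x y
  simp only [firstZ, mul_diagonal, diagonal_mul, Matrix.neg_apply, pauliPow, Matrix.of_apply,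
    Fin.prod_univ_succ]
  linear_combination (∏ t : Fin m, σ 0 (x t.succ) (y t.succ)) * key (x 0) (y 0)

/-- An unnormalised Hadamard-type matrix, exchanging `σ₁^{⊗N}` and `σ₃ ⊗ 1 ⊗ ⋯ ⊗ 1` by
conjugation. -/
def hadamardLike (m : ℕ) : Matrix (Fin (m + 1) → Fin 2) (Fin (m + 1) → Fin 2) ℂ :=
  firstZ m + pauliPow (m + 1) 0

lemma hadamardLike_mul_self (m : ℕ) : hadamardLike m * hadamardLike m = (2 : ℂ) • 1 := by
  rw [hadamardLike, add_mul, mul_add, mul_add, firstZ_mul_self, pauliPow_zero_mul_self,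
    firstZ_anticomm, two_smul]
  abel

lemma hadamardLike_mul_pauliPow (m : ℕ) :
    hadamardLike m * pauliPow (m + 1) 0 = firstZ m * hadamardLike m := by
  rw [hadamardLike, add_mul, mul_add, firstZ_mul_self, pauliPow_zero_mul_self]
  exact add_comm _ _

lemma hadamardLike_comm_pauliPow_two (m : ℕ) (hN : (m + 1) % 4 = 0) :
    hadamardLike m * pauliPow (m + 1) 2 = pauliPow (m + 1) 2 * hadamardLike m := by
  rw [hadamardLike, add_mul, mul_add, pauliPow_two_mul_zero hN]
  congr 1
  simp [pauliPow_two, firstZ, diagonal_mul_diagonal, mul_comm]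

/-- The eigenvalue of `ρ_N` on the joint eigenspace where `σ₁^{⊗N}` acts as `z` and `σ₃^{⊗N}`
as `s`. -/
def eigenval (N : ℕ) (c₁ c₂ c₃ : ℝ) (z s : ℂ) : ℂ :=
  ((2 : ℂ) ^ N)⁻¹ * (1 + c₁ * z + c₂ * (z * s) + c₃ * s)

lemma hadamardLike_mul_rhoN (m : ℕ) (hN : (m + 1) % 4 = 0) (c₁ c₂ c₃ : ℝ) :
    hadamardLike m * rhoN (m + 1) c₁ c₂ c₃ =
      (diagonal fun x => eigenval (m + 1) c₁ c₂ c₃ (bitSign (x 0)) (paritySign x)) *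
        hadamardLike m := by
  have hD : (diagonal fun x : Fin (m + 1) → Fin 2 =>
        eigenval (m + 1) c₁ c₂ c₃ (bitSign (x 0)) (paritySign x)) =
      ((2 : ℂ) ^ (m + 1))⁻¹ • (1 + (c₁ : ℂ) • firstZ m +
        (c₂ : ℂ) • (firstZ m * pauliPow (m + 1) 2) + (c₃ : ℂ) • pauliPow (m + 1) 2) := by
    rw [pauliPow_two, firstZ, diagonal_mul_diagonal, ← diagonal_one]
    simp only [← diagonal_smul, diagonal_add]
    rfl
  have h2 : hadamardLike m * pauliPow (m + 1) 1 =
      firstZ m * pauliPow (m + 1) 2 * hadamardLike m := by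
    rw [← pauliPow_zero_mul_two hN, ← mul_assoc, hadamardLike_mul_pauliPow, mul_assoc,
      hadamardLike_comm_pauliPow_two m hN, mul_assoc]
  rw [hD, rhoN]
  simp only [Matrix.mul_smul, Matrix.smul_mul, mul_add, add_mul, mul_one, one_mul,
    hadamardLike_mul_pauliPow, h2, hadamardLike_comm_pauliPow_two m hN]

lemma charpoly_rhoN_eq_prod (m : ℕ) (hN : (m + 1) % 4 = 0) (c₁ c₂ c₃ : ℝ) :
    (rhoN (m + 1) c₁ c₂ c₃).charpoly = ∏ x : Fin (m + 1) → Fin 2,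
      (X - C (eigenval (m + 1) c₁ c₂ c₃ (bitSign (x 0)) (paritySign x))) := by
  have hinv : hadamardLike m * ((2 : ℂ)⁻¹ • hadamardLike m) = 1 := by
    rw [Matrix.mul_smul, hadamardLike_mul_self, smul_smul]
    norm_num
  have hinv' : ((2 : ℂ)⁻¹ • hadamardLike m) * hadamardLike m = 1 := by
    rw [Matrix.smul_mul, hadamardLike_mul_self, smul_smul]
    norm_num
  let U : (Matrix (Fin (m + 1) → Fin 2) (Fin (m + 1) → Fin 2) ℂ)ˣ :=
    ⟨hadamardLike m, (2 : ℂ)⁻¹ • hadamardLike m, hinv, hinv'⟩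
  rw [← Matrix.charpoly_units_conj U (rhoN (m + 1) c₁ c₂ c₃)]
  have hU : U.val⁻¹ = (2 : ℂ)⁻¹ • hadamardLike m := Matrix.inv_eq_right_inv hinv
  rw [hU, show U.val = hadamardLike m from rfl,
    hadamardLike_mul_rhoN m hN, mul_assoc, hinv, mul_one, Matrix.charpoly_diagonal]

lemma prod_cons {N : ℕ} (F : (Fin (N + 1) → Fin 2) → ℂ[X]) :
    ∏ x, F x = (∏ y : Fin N → Fin 2, F (Fin.cons 0 y)) * ∏ y : Fin N → Fin 2, F (Fin.cons 1 y) := by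
  rw [← (Fin.consEquiv fun _ => Fin 2).prod_comp, Fintype.prod_prod_type, Fin.prod_univ_two]
  rfl

lemma paritySign_cons {N : ℕ} (a : Fin 2) (y : Fin N → Fin 2) :
    paritySign (Fin.cons a y : Fin (N + 1) → Fin 2) = bitSign a * paritySign y := by
  simp [paritySign, Fin.prod_univ_succ]

lemma bitSign_zero : bitSign 0 = 1 := rfl

lemma bitSign_one : bitSign 1 = -1 := rfl

/-- Half of the bit strings of positive length have even parity. -/
lemma prod_paritySign (n : ℕ) (F : ℂ → ℂ[X]) :
    ∏ x : Fin (n + 1) → Fin 2, F (paritySign x) = (F 1 * F (-1)) ^ 2 ^ n := by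
  induction n generalizing F with
  | zero => simp [prod_cons, bitSign_zero, bitSign_one, paritySign]
  | succ n ih =>
    rw [prod_cons]
    simp only [paritySign_cons, bitSign_zero, bitSign_one, one_mul, neg_one_mul]
    rw [ih F, ih fun s => F (-s), neg_neg, mul_comm (F (-1)), ← pow_add, pow_succ, mul_two]

lemma prod_bitSign_paritySign (n : ℕ) (F : ℂ → ℂ → ℂ[X]) :
    ∏ x : Fin (n + 2) → Fin 2, F (bitSign (x 0)) (paritySign x) =
      (F 1 1 * F 1 (-1) * F (-1) 1 * F (-1) (-1)) ^ 2 ^ n := by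
  rw [prod_cons]
  simp only [paritySign_cons, bitSign_zero, bitSign_one, one_mul, neg_one_mul, Fin.cons_zero]
  rw [prod_paritySign n (F 1), prod_paritySign n fun s => F (-1) (-s), neg_neg, ← mul_pow]
  ring

theorem charpoly_rhoN_zero_mod_four (N : ℕ) (hN1 : 1 ≤ N) (hN : N % 4 = 0) (c₁ c₂ c₃ : ℝ) :
    (rhoN N c₁ c₂ c₃).charpoly =
      ((X - C (((1 + c₁ - c₂ - c₃) / 2 ^ N : ℝ) : ℂ)) *
        (X - C (((1 - c₁ + c₂ - c₃) / 2 ^ N : ℝ) : ℂ)) *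
        (X - C (((1 - c₁ - c₂ + c₃) / 2 ^ N : ℝ) : ℂ)) *
        (X - C (((1 + c₁ + c₂ + c₃) / 2 ^ N : ℝ) : ℂ))) ^ 2 ^ (N - 2) := by
  obtain ⟨n, rfl⟩ : ∃ n, N = n + 2 := ⟨N - 2, by omega⟩
  have hprod := (charpoly_rhoN_eq_prod (n + 1) hN c₁ c₂ c₃).trans
    (prod_bitSign_paritySign n fun z s => X - C (eigenval (n + 2) c₁ c₂ c₃ z s))
  have e1 : (((1 + c₁ - c₂ - c₃) / 2 ^ (n + 2) : ℝ) : ℂ) = eigenval (n + 2) c₁ c₂ c₃ 1 (-1) := by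
    rw [eigenval]; push_cast; ring
  have e2 : (((1 - c₁ + c₂ - c₃) / 2 ^ (n + 2) : ℝ) : ℂ) =
      eigenval (n + 2) c₁ c₂ c₃ (-1) (-1) := by
    rw [eigenval]; push_cast; ring
  have e3 : (((1 - c₁ - c₂ + c₃) / 2 ^ (n + 2) : ℝ) : ℂ) = eigenval (n + 2) c₁ c₂ c₃ (-1) 1 := by
    rw [eigenval]; push_cast; ring
  have e4 : (((1 + c₁ + c₂ + c₃) / 2 ^ (n + 2) : ℝ) : ℂ) = eigenval (n + 2) c₁ c₂ c₃ 1 1 := by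
    rw [eigenval]; push_cast; ring
  rw [e1, e2, e3, e4, Nat.add_sub_cancel]
  refine hprod.trans (congrArg (· ^ 2 ^ n) ?_)
  generalize X - C (eigenval (n + 2) c₁ c₂ c₃ 1 1) = p₁
  generalize X - C (eigenval (n + 2) c₁ c₂ c₃ 1 (-1)) = p₂
  generalize X - C (eigenval (n + 2) c₁ c₂ c₃ (-1) 1) = p₃
  generalize X - C (eigenval (n + 2) c₁ c₂ c₃ (-1) (-1)) = p₄
  ring
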